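/- arXiv:2510.06849 — 2 statements merged into one kernel-verified Lean document; each statement's English description precedes it below -/
import Mathlib

section
/- If a temporal graph G admits an ATTO, then the set Ness(G) of necessary arcs induces an acyclic digraph (it contains no directed cycle). -/
def IsOrientation {V : Type*} (G : SimpleGraph V) (O : V → V → Prop) : Prop :=
  (∀ a b, O a b → G.Adj a b) ∧ (∀ a b, G.Adj a b → (O a b ↔ ¬ O b a))

/-- Arc of the implication digraph `Imp(G)`. -/
def ImpArc {V : Type*} (G : SimpleGraph V) (lam : V → V → ℕ) (p q : V × V) : Prop :=
  ∃ a b c, G.Adj a b ∧ G.Adj b c ∧ lam a b ≤ lam b c ∧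
    (¬ G.Adj a c ∨ lam a c < lam b c) ∧
    ((p = (a, b) ∧ q = (c, b)) ∨ (p = (b, c) ∧ q = (b, a)))

/-- `(a,b,c,d)` is a correlated monolabel triangle with common label `t`. -/
def CorrTri {V : Type*} (G : SimpleGraph V) (lam : V → V → ℕ) (a b c d : V) (t : ℕ) : Prop :=
  G.Adj a b ∧ G.Adj b c ∧ G.Adj c a ∧
    lam a b = t ∧ lam b c = t ∧ lam c a = t ∧
    G.Adj b d ∧ lam b d ≤ t ∧ G.Adj c d ∧ t < lam c d ∧
    (G.Adj a d → lam a d < t)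

/-- Arc of the augmented implication digraph `Aug(G)`. -/
def AugArc {V : Type*} (G : SimpleGraph V) (lam : V → V → ℕ) (p q : V × V) : Prop :=
  ImpArc G lam p q ∨
    ∃ a b c d t, CorrTri G lam a b c d t ∧
      ((p = (b, c) ∧ q = (a, c)) ∨ (p = (c, a) ∧ q = (c, b)))

/-- `p` forces `q`: directed path (possibly empty) from `p` to `q` in `Aug(G)`. -/
def Forces {V : Type*} (G : SimpleGraph V) (lam : V → V → ℕ) : V × V → V × V → Prop :=
  Relation.ReflTransGen (AugArc G lam)

/-- The set of necessary arcs of `G`. -/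
def Ness {V : Type*} (G : SimpleGraph V) (lam : V → V → ℕ) : Set (V × V) :=
  {p | G.Adj p.1 p.2 ∧ Forces G lam (p.2, p.1) p}

/-- Almost-temporal transitive orientation. -/
def IsATTO {V : Type*} (G : SimpleGraph V) (lam : V → V → ℕ) (O : V → V → Prop) : Prop :=
  IsOrientation G O ∧ ∀ p q, O p.1 p.2 → Forces G lam p q → O q.1 q.2

/-- `Ness(G)` induces an acyclic digraph (no directed cycle, including 2-cycles). -/
def NessAcyclic {V : Type*} (G : SimpleGraph V) (lam : V → V → ℕ) : Prop :=
  ¬ ∃ k : ℕ, 2 ≤ k ∧ ∃ v : ZMod k → V, Function.Injective v ∧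
      ∀ i, (v i, v (i + 1)) ∈ Ness G lam

section aux
variable {V : Type*} {G : SimpleGraph V} {lam : V → V → ℕ} {O : V → V → Prop}

/-- Elementary consequences of being an ATTO. -/
structure Facts (G : SimpleGraph V) (lam : V → V → ℕ) (O : V → V → Prop) : Prop where
  sym : ∀ a b, lam a b = lam b a
  asym : ∀ a b, G.Adj a b → G.Adj b a
  adj : ∀ a b, O a b → G.Adj a b
  anti : ∀ a b, O a b → ¬ O b a
  tot : ∀ a b, G.Adj a b → O a b ∨ O b a
  /-- a → b → c requires a late edge ac -/
  imp : ∀ a b c, O a b → O b c → lam a b ≤ lam b c → G.Adj a c ∧ lam b c ≤ lam a c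
  aug : ∀ a b c d t, CorrTri G lam a b c d t → O b c → O c a → False

lemma IsATTO.facts (hsym : ∀ a b, lam a b = lam b a) (h : IsATTO G lam O) : Facts G lam O := by
  obtain ⟨⟨h1, h2⟩, h3⟩ := h
  have anti : ∀ a b, O a b → ¬ O b a := fun a b hab => (h2 a b (h1 _ _ hab)).1 hab
  refine ⟨hsym, fun a b h => h.symm, h1, anti, ?_, ?_, ?_⟩
  · intro a b hab
    by_cases h : O b a
    · exact Or.inr h
    · exact Or.inl ((h2 a b hab).2 h)
  · intro a b c hab hbc hl
    by_contra hcon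
    have : ImpArc G lam (a, b) (c, b) :=
      ⟨a, b, c, h1 _ _ hab, h1 _ _ hbc, hl, by
        by_cases h : G.Adj a c
        · right; by_contra h'; exact hcon ⟨h, by omega⟩
        · exact Or.inl h, Or.inl ⟨rfl, rfl⟩⟩
    exact anti _ _ hbc (h3 (a, b) (c, b) hab (Relation.ReflTransGen.single (Or.inl this)))
  · intro a b c d t hc hbc hca
    exact anti _ _ hca (h3 (b, c) (a, c) hbc
      (Relation.ReflTransGen.single (Or.inr ⟨a, b, c, d, t, hc, Or.inl ⟨rfl, rfl⟩⟩)))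

/-- Directed monolabel triangle. -/
structure Cyc (lam : V → V → ℕ) (O : V → V → Prop) (t : ℕ) (x y c : V) : Prop where
  xy : O x y
  yc : O y c
  cx : O c x
  lxy : lam x y = t
  lyc : lam y c = t
  lcx : lam c x = t

lemma Cyc.rot {t : ℕ} {x y c : V} (h : Cyc lam O t x y c) : Cyc lam O t y c x :=
  ⟨h.yc, h.cx, h.xy, h.lyc, h.lcx, h.lxy⟩

/-- max edge `yd` above `t`, edge `xd` at most `t`, forces contradiction -/
lemma Facts.ncA (F : Facts G lam O) {t : ℕ} {x y c d : V} (h : Cyc lam O t x y c)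
    (h1 : G.Adj x d) (hle : lam x d ≤ t) (h2 : G.Adj y d) (hgt : t < lam y d)
    (h3 : G.Adj c d → lam c d < t) : False := by
  obtain ⟨xy, yc, cx, lxy, lyc, lcx⟩ := h
  have s := F.sym
  exact F.aug c x y d t ⟨F.adj _ _ cx, F.adj _ _ xy, F.adj _ _ yc, lcx, lxy, lyc, h1, hle, h2, hgt, h3⟩ xy yc

lemma Facts.ncB (F : Facts G lam O) {t : ℕ} {x y c d : V} (h : Cyc lam O t x y c)
    (h1 : G.Adj y d) (hle : lam y d ≤ t) (h2 : G.Adj x d) (hgt : t < lam x d)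
    (h3 : G.Adj c d → lam c d < t) : False := by
  obtain ⟨xy, yc, cx, lxy, lyc, lcx⟩ := h
  have a1 : O d x := by
    rcases F.tot _ _ h2 with h | h
    · have := F.imp _ _ _ cx h (by omega)
      have := h3 this.1
      omega
    · exact h
  have a2 : O d y := by
    rcases F.tot _ _ h1 with h | h
    · have := F.imp _ _ _ h a1 (by have := F.sym d x; omega)
      have := F.sym d x; have := F.sym x y; omega
    · exact h
  have := F.imp _ _ _ a2 yc (by have := F.sym d y; omega)
  have := h3 (F.asym _ _ this.1)
  have := F.sym c d
  omega

/-- a vertex seeing a directed triangle with a high edge, an edge at most `t`, and a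
nonedge or low edge is impossible -/
lemma Facts.nc (F : Facts G lam O) {t : ℕ} {x y c : V} (h : Cyc lam O t x y c) (d u v w : V)
    (hp : (u = x ∧ v = y ∧ w = c) ∨ (u = y ∧ v = c ∧ w = x) ∨ (u = c ∧ v = x ∧ w = y) ∨
      (u = y ∧ v = x ∧ w = c) ∨ (u = c ∧ v = y ∧ w = x) ∨ (u = x ∧ v = c ∧ w = y))
    (h1 : G.Adj u d) (hle : lam u d ≤ t) (h2 : G.Adj v d) (hgt : t < lam v d)
    (h3 : G.Adj w d → lam w d < t) : False := by
  rcases hp with ⟨rfl, rfl, rfl⟩ | ⟨rfl, rfl, rfl⟩ | ⟨rfl, rfl, rfl⟩ | ⟨rfl, rfl, rfl⟩ |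
    ⟨rfl, rfl, rfl⟩ | ⟨rfl, rfl, rfl⟩
  · exact F.ncA h h1 hle h2 hgt h3
  · exact F.ncA h.rot h1 hle h2 hgt h3
  · exact F.ncA h.rot.rot h1 hle h2 hgt h3
  · exact F.ncB h h1 hle h2 hgt h3
  · exact F.ncB h.rot h1 hle h2 hgt h3
  · exact F.ncB h.rot.rot h1 hle h2 hgt h3

/-- Backward step, `(z,y) → (x,y)`. -/
lemma Facts.back1 (F : Facts G lam O) {t : ℕ} {x y c z : V} (h : Cyc lam O t x y c)
    (zy : O z y) (hl : lam z y ≤ t) (hz : G.Adj z x → lam z x < t) : Cyc lam O t z y c := by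
  have nc := F.nc h z
  obtain ⟨xy, yc, cx, lxy, lyc, lcx⟩ := h
  obtain ⟨sym, asym, adj, anti, tot, imp, aug⟩ := F
  have := imp _ _ _ zy yc (by omega)
  have h1 : lam z c = t := by
    by_contra hne
    refine nc y c x (by simp) (asym _ _ (adj _ _ zy)) (by grind) (asym _ _ this.1) (by grind) (by grind)
  have h2 : O c z := by
    rcases tot _ _ this.1 with h | h
    · grind
    · exact h
  refine ⟨zy, yc, h2, ?_, lyc, by grind⟩
  by_contra hne
  have := imp _ _ _ yc h2
  grind

/-- Backward step, `(x,z) → (x,y)`. -/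
lemma Facts.back2 (F : Facts G lam O) {t : ℕ} {x y c z : V} (h : Cyc lam O t x y c)
    (xz : O x z) (hl : t ≤ lam x z) (hz : G.Adj y z → lam y z < lam x z) : Cyc lam O t x z c := by
  have nc := F.nc h z
  obtain ⟨xy, yc, cx, lxy, lyc, lcx⟩ := h
  obtain ⟨sym, asym, adj, anti, tot, imp, aug⟩ := F
  have hcz := imp _ _ _ cx xz (by omega)
  have h2 : O z c := by
    rcases tot _ _ hcz.1 with h | h
    · grind
    · exact h
  have := imp _ _ _ xz h2
  have h4 : lam x z = t := by grind
  have h5 : lam c z = t := by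
    by_contra hne
    exact nc x c y (by simp) (adj _ _ xz) (by grind) hcz.1 (by grind) (by grind)
  exact ⟨xz, h2, cx, h4, by grind, lcx⟩

/-- Backward step, `(B,y) → (x,y)` through a correlated triangle. -/
lemma Facts.back3 (F : Facts G lam O) {t : ℕ} {x y c B d : V} (h : Cyc lam O t x y c)
    (hT : CorrTri G lam x B y d t) (By : O B y) : Cyc lam O t B y c := by
  have nc := F.nc h d
  have nc' := fun h => F.nc (t := t) (x := x) (y := B) (c := c) h d
  obtain ⟨xy, yc, cx, lxy, lyc, lcx⟩ := h
  obtain ⟨sym, asym, adj, anti, tot, imp, aug⟩ := F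
  obtain ⟨axB, aBy, ayx, lxB, lBy, lyx, aBd, lBd, ayd, lyd, hxd⟩ := hT
  have hdy : O d y := by
    rcases tot _ _ ayd with h | h
    · grind
    · exact h
  have hdB : O d B := by
    rcases tot _ _ aBd with h | h
    · grind
    · exact h
  have hxB : O x B := by
    rcases tot _ _ axB with h | h
    · exact h
    · grind
  have hBc := imp _ _ _ By yc (by omega)
  have lBc : lam B c = t := by
    rcases tot _ _ hBc.1 with h | h
    · have := imp _ _ _ cx hxB
      grind
    · have := imp _ _ _ yc h
      grind
  have hcB : O c B := by
    rcases tot _ _ hBc.1 with h | h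
    · exfalso
      have C : Cyc lam O t x B c := ⟨hxB, h, cx, lxB, lBc, lcx⟩
      have hdc := imp _ _ _ hdB h (by grind)
      have n1 := nc c y x (by simp) (asym _ _ hdc.1)
      have n2 := nc' C B c x (by simp) aBd lBd (asym _ _ hdc.1)
      grind
    · exact h
  exact ⟨By, yc, hcB, lBy, lyc, by grind⟩

/-- Backward step, `(x,A) → (x,y)` through a correlated triangle. -/
lemma Facts.back4 (F : Facts G lam O) {t : ℕ} {x y c A d : V} (h : Cyc lam O t x y c)
    (hT : CorrTri G lam A y x d t) (xA : O x A) : Cyc lam O t x A c := by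
  have nc := F.nc h d
  have nc' := fun h => F.nc (t := t) (x := y) (y := c) (c := A) h d
  obtain ⟨xy, yc, cx, lxy, lyc, lcx⟩ := h
  obtain ⟨sym, asym, adj, anti, tot, imp, aug⟩ := F
  obtain ⟨aAy, ayx, axA, lAy, lyx, lxA, ayd, lyd, axd, lxd, hAd⟩ := hT
  have hcA := imp _ _ _ cx xA (by grind)
  have lcA : lam c A = t := by
    rcases tot _ _ hcA.1 with h | h
    · have := imp _ _ _ yc h
      grind
    · have := imp _ _ _ xA h
      grind
  have hAc : O A c := by
    rcases tot _ _ hcA.1 with h | h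
    swap
    · exact h
    exfalso
    have hcd : G.Adj c d ∧ t ≤ lam c d := by
      by_contra hcon
      exact nc y x c (by simp) ayd lyd axd lxd (by grind)
    have hcd2 : ¬ t < lam c d := by
      intro hlt
      exact aug A y c d t ⟨aAy, adj _ _ yc, hcA.1, lAy, lyc, lcA, ayd, lyd, hcd.1, hlt, hAd⟩ yc h
    have hod : O c d := by
      rcases tot _ _ hcd.1 with h' | h'
      · exact h'
      · grind
    have hod2 : O x d := by
      rcases tot _ _ axd with h' | h'
      · exact h'
      · have := imp _ _ _ hod h'
        grind
    have hdx : O d x := by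
      rcases tot _ _ ayd with h' | h'
      · rcases tot _ _ axd with h'' | h''
        · grind
        · exact h''
      · grind
    exact anti _ _ hdx hod2
  exact ⟨xA, hAc, cx, by grind, by grind, lcx⟩

lemma Facts.back (F : Facts G lam O) {t : ℕ} {c : V} {p q : V × V} (h : Cyc lam O t q.1 q.2 c)
    (hp : O p.1 p.2) (ha : AugArc G lam p q) : Cyc lam O t p.1 p.2 c := by
  rcases ha with ⟨a, b, e, h1, h2, h3, h4, ⟨rfl, rfl⟩ | ⟨rfl, rfl⟩⟩ |
    ⟨a, b, e, d, s, hT, ⟨rfl, rfl⟩ | ⟨rfl, rfl⟩⟩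
  · have hl := h.lxy
    have := F.sym e b
    simp only at *
    exact F.back1 h hp (by omega) (by intro; rcases h4 with h4 | h4 <;> [contradiction; omega])
  · have hl := h.lxy
    have := F.sym a b
    simp only at *
    exact F.back2 h hp (by omega) (by intro; rcases h4 with h4 | h4 <;> [contradiction; omega])
  · have hs : s = t := by
      have h1 := h.lxy; have h2 := hT.2.2.2.2.2.1; have := F.sym a e
      simp only at *; omega
    subst hs
    exact F.back3 h hT hp
  · have hs : s = t := by
      have h1 := h.lxy; have h2 := hT.2.2.2.2.1; have := F.sym b e
      simp only at *; omega
    subst hs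
    exact F.back4 h hT hp

lemma Facts.backs (F : Facts G lam O) (hO : IsATTO G lam O) {t : ℕ} {c : V} {p q : V × V}
    (h : Cyc lam O t q.1 q.2 c)
    (hp : O p.1 p.2) (ha : Forces G lam p q) : Cyc lam O t p.1 p.2 c := by
  induction ha using Relation.ReflTransGen.head_induction_on with
  | refl => exact h
  | head h1 h2 ih =>
    exact F.back (ih (hO.2 _ _ hp (Relation.ReflTransGen.single (h1)))) hp h1

lemma AugArc.dual (hsym : ∀ a b, lam a b = lam b a) {p q : V × V} (h : AugArc G lam p q) :
    AugArc G lam q.swap p.swap := by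
  rcases h with ⟨a, b, e, h1, h2, h3, h4, ⟨rfl, rfl⟩ | ⟨rfl, rfl⟩⟩ |
    ⟨a, b, e, d, s, hT, ⟨rfl, rfl⟩ | ⟨rfl, rfl⟩⟩
  · exact Or.inl ⟨a, b, e, h1, h2, h3, h4, Or.inr ⟨rfl, rfl⟩⟩
  · exact Or.inl ⟨a, b, e, h1, h2, h3, h4, Or.inl ⟨rfl, rfl⟩⟩
  · exact Or.inr ⟨a, b, e, d, s, hT, Or.inr ⟨rfl, rfl⟩⟩
  · exact Or.inr ⟨a, b, e, d, s, hT, Or.inl ⟨rfl, rfl⟩⟩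

lemma Forces.dual (hsym : ∀ a b, lam a b = lam b a) {p q : V × V} (h : Forces G lam p q) :
    Forces G lam q.swap p.swap := by
  induction h with
  | refl => exact Relation.ReflTransGen.refl
  | tail _ h ih => exact Relation.ReflTransGen.head (h.dual hsym) ih

lemma AugArc.share {p q : V × V} (h : AugArc G lam p q) : p.1 = q.1 ∨ p.2 = q.2 := by
  rcases h with ⟨a, b, e, h1, h2, h3, h4, ⟨rfl, rfl⟩ | ⟨rfl, rfl⟩⟩ |
    ⟨a, b, e, d, s, hT, ⟨rfl, rfl⟩ | ⟨rfl, rfl⟩⟩ <;> simp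

lemma AugArc.adj {p q : V × V} (h : AugArc G lam p q) : G.Adj p.1 p.2 := by
  rcases h with ⟨a, b, e, h1, h2, h3, h4, ⟨rfl, rfl⟩ | ⟨rfl, rfl⟩⟩ |
    ⟨a, b, e, d, s, hT, ⟨rfl, rfl⟩ | ⟨rfl, rfl⟩⟩
  · exact h1
  · exact h2
  · exact hT.2.1
  · exact hT.2.2.1

/-- the first crossing into a forward-closed predicate along a path -/
lemma exists_cross {α : Type*} {r : α → α → Prop} {P : α → Prop} {a b : α}
    (h : Relation.ReflTransGen r a b) (ha : ¬ P a) (hb : P b) :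
    ∃ p q, Relation.ReflTransGen r a p ∧ r p q ∧ Relation.ReflTransGen r q b ∧ ¬ P p ∧ P q := by
  induction h with
  | refl => exact absurd hb ha
  | @tail b c h1 h2 ih =>
    by_cases hc : P b
    · obtain ⟨p, q, h3, h4, h5, h6⟩ := ih hc
      exact ⟨p, q, h3, h4, h5.tail h2, h6⟩
    · exact ⟨b, c, h1, h2, .refl, hc, hb⟩

/-- A necessary arc lies on no directed monolabel triangle of an ATTO. -/
lemma Facts.ness_not_cyc (F : Facts G lam O) (hO : IsATTO G lam O) {t : ℕ} {a b c : V}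
    (hN : (a, b) ∈ Ness G lam) (h : Cyc lam O t a b c) : False := by
  obtain ⟨p, q, h1, h2, h3, h4, h5⟩ :=
    exists_cross (P := fun p : V × V => O p.1 p.2) hN.2 (F.anti _ _ h.xy) h.xy
  have C1 : Cyc lam O t q.1 q.2 c := F.backs hO (q := (a, b)) h h5 h3
  have hp : O p.2 p.1 := by
    rcases F.tot _ _ h2.adj with h | h
    · exact absurd h h4
    · exact h
  have C2 : Cyc lam O t p.2 p.1 c :=
    F.backs hO (q := (a, b)) (p := p.swap) h hp (Forces.dual F.sym h1)
  rcases h2.share with e | e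
  · exact F.anti _ _ C1.cx (e ▸ C2.yc)
  · exact F.anti _ _ C1.yc (e ▸ C2.cx)

/-- If `(a,c)` is not necessary, some ATTO contains `(c,a)`. -/
lemma exists_atto (hsym : ∀ a b, lam a b = lam b a) (hO : IsATTO G lam O) {a c : V}
    (hac : G.Adj a c) (hn : (a, c) ∉ Ness G lam) : ∃ O', IsATTO G lam O' ∧ O' c a := by
  have F := hO.facts hsym
  have hn' : ¬ Forces G lam (c, a) (a, c) := fun h => hn ⟨hac, h⟩
  have key : ∀ x y, Forces G lam (c, a) (x, y) → Forces G lam (c, a) (y, x) → False :=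
    fun x y h1 h2 => hn' (Relation.ReflTransGen.trans h1 (Forces.dual hsym h2))
  have fadj : ∀ q, Forces G lam (c, a) q → G.Adj q.1 q.2 := by
    intro q hq
    rcases Relation.ReflTransGen.cases_head (Forces.dual hsym hq) with h | ⟨r, h, _⟩
    · have : q = (c, a) := by simpa using congrArg Prod.swap h
      subst this; exact hac.symm
    · exact h.adj.symm
  refine ⟨fun x y => Forces G lam (c, a) (x, y) ∨ (O x y ∧ ¬ Forces G lam (c, a) (y, x)),
    ⟨⟨?_, ?_⟩, ?_⟩, Or.inl Relation.ReflTransGen.refl⟩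
  · rintro x y (h | h)
    · exact fadj _ h
    · exact F.adj _ _ h.1
  · intro x y hxy
    have h1 := key x y
    have h2 := F.tot x y hxy
    have h3 := F.anti x y
    tauto
  · rintro ⟨x, y⟩ ⟨u, v⟩ (h | h) hf
    · exact Or.inl (Relation.ReflTransGen.trans h hf)
    · exact Or.inr ⟨hO.2 _ _ h.1 hf, fun h' => h.2 (Relation.ReflTransGen.trans h' (Forces.dual hsym hf))⟩

lemma ness_sub (hO : IsATTO G lam O) {a b : V} (h : (a, b) ∈ Ness G lam) : O a b := by
  by_contra hn
  have : O b a := by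
    by_contra h'
    exact hn ((hO.1.2 _ _ h.1).2 h')
  exact hn (hO.2 _ _ this h.2)

lemma ness_step (hsym : ∀ a b, lam a b = lam b a) {p q : V × V}
    (h : p ∈ Ness G lam) (hf : AugArc G lam p q) : q ∈ Ness G lam := by
  have hd := hf.dual hsym
  refine ⟨hd.adj.symm, ?_⟩
  exact Relation.ReflTransGen.head hd (Relation.ReflTransGen.tail h.2 hf)

lemma ness_tr (hsym : ∀ a b, lam a b = lam b a) (hO : IsATTO G lam O) {a b c : V}
    (hab : (a, b) ∈ Ness G lam) (hbc : (b, c) ∈ Ness G lam) (hl : lam a b ≤ lam b c) :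
    (a, c) ∈ Ness G lam := by
  have F := hO.facts hsym
  obtain ⟨hac, hl2⟩ := F.imp _ _ _ (ness_sub hO hab) (ness_sub hO hbc) hl
  have s1 := hsym a b
  have s2 := hsym a c
  by_cases hlt : lam a b < lam a c
  · exact ness_step hsym hbc (Or.inl ⟨b, c, a, hbc.1, hac.symm, by omega, Or.inr (by omega),
      Or.inl ⟨rfl, rfl⟩⟩)
  · by_contra hn
    obtain ⟨O', hO', hca⟩ := exists_atto hsym hO hac hn
    exact (hO'.facts hsym).ness_not_cyc hO' (t := lam a b) (c := c) hab
      ⟨ness_sub hO' hab, ness_sub hO' hbc, hca, rfl, by omega, by omega⟩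

lemma no_closed_walk {N : V → V → Prop} (hirr : ∀ a, ¬ N a a)
    (htr : ∀ a b c, N a b → N b c → lam a b ≤ lam b c → N a c) (k : ℕ) :
    ∀ v : ℕ → V, (∀ i, v (i + (k + 1)) = v i) → (∀ i, N (v i) (v (i + 1))) → False := by
  induction k with
  | zero =>
    intro v hv hN
    have := hN 0
    rw [hv 0] at this
    exact hirr _ this
  | succ k ih =>
    intro v hv hN
    have hex : ∃ i, lam (v i) (v (i + 1)) ≤ lam (v (i + 1)) (v (i + 2)) := by
      by_contra! hcon
      have : ∀ i, lam (v i) (v (i + 1)) + i ≤ lam (v 0) (v 1) := by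
        intro i
        induction i with
        | zero => simp
        | succ i ihi => have := hcon i; simp only [add_assoc] at *; norm_num at *; omega
      have := this (lam (v 0) (v 1) + 1)
      omega
    obtain ⟨i, hi⟩ := hex
    refine ih (fun j => v (i + 2 + j % (k + 1))) (fun j => by simp) (fun j => ?_)
    have hlt : j % (k + 1) < k + 1 := Nat.mod_lt _ (by omega)
    by_cases h : j % (k + 1) = k
    · have e : (j + 1) % (k + 1) = 0 := by
        rw [Nat.add_mod, h]; rcases k with _ | k
        · simp [Nat.mod_one]
        · simp
      simp only [h, e]
      have e2 : v (i + 2 + k) = v i := by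
        rw [← hv i]; congr 1; omega
      rw [e2]
      exact htr _ _ _ (hN i) (hN (i + 1)) hi
    · have e : (j + 1) % (k + 1) = j % (k + 1) + 1 := by
        rw [← Nat.mod_add_mod]; exact Nat.mod_eq_of_lt (by omega)
      simp only [e]
      exact hN _

end aux

theorem stmt12 {V : Type*} [Fintype V] (G : SimpleGraph V) (lam : V → V → ℕ)
    (hsym : ∀ a b, lam a b = lam b a)
    (h : ∃ O : V → V → Prop, IsATTO G lam O) :
    NessAcyclic G lam := by
  obtain ⟨O, hO⟩ := h
  rintro ⟨k, hk, v, -, hv⟩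
  obtain ⟨k, rfl⟩ : ∃ m, k = m + 1 := ⟨k - 1, by omega⟩
  refine no_closed_walk (N := fun a b => (a, b) ∈ Ness G lam) (lam := lam)
    (fun a ha => G.loopless.irrefl _ ha.1) (fun a b c => ness_tr hsym hO) k
    (fun i => v (i : ZMod (k + 1))) (fun i => ?_) (fun i => ?_)
  · have := ZMod.natCast_self (k + 1)
    push_cast at this ⊢
    rw [this, add_zero]
  · have := hv (i : ZMod (k + 1))
    push_cast
    exact this
end

section
/- A temporal graph G is a T-comparability graph (admits a TTO) if and only if it admits an ATTO, if and only if Ness(G) induces an acyclic digraph. -/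
def IsTTO {V : Type*} (G : SimpleGraph V) (lam : V → V → ℕ) (O : V → V → Prop) : Prop :=
  IsOrientation G O ∧
    ∀ a b c, O a b → O b c → lam a b ≤ lam b c → O a c ∧ lam b c ≤ lam a c

section Helpers
variable {V : Type*} {G : SimpleGraph V} {lam : V → V → ℕ} {O : V → V → Prop}

lemma augArc_swap {p q : V × V} (h : AugArc G lam p q) : AugArc G lam q.swap p.swap := by
  rcases h with ⟨a, b, c, h1, h2, h3, h4, h5⟩ | ⟨a, b, c, d, t, h1, h5⟩
  · refine Or.inl ⟨a, b, c, h1, h2, h3, h4, ?_⟩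
    rcases h5 with ⟨rfl, rfl⟩ | ⟨rfl, rfl⟩ <;> simp
  · refine Or.inr ⟨a, b, c, d, t, h1, ?_⟩
    rcases h5 with ⟨rfl, rfl⟩ | ⟨rfl, rfl⟩ <;> simp

lemma forces_swap {p q : V × V} (h : Forces G lam p q) : Forces G lam q.swap p.swap := by
  induction h with
  | refl => exact Relation.ReflTransGen.refl
  | tail _ h2 ih => exact Relation.ReflTransGen.head (augArc_swap h2) ih

lemma augArc_adj {p q : V × V} (h : AugArc G lam p q) : G.Adj q.1 q.2 := by
  rcases h with ⟨a, b, c, h1, h2, h3, h4, h5⟩ | ⟨a, b, c, d, t, h1, h5⟩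
  · rcases h5 with ⟨rfl, rfl⟩ | ⟨rfl, rfl⟩
    · exact h2.symm
    · exact h1.symm
  · obtain ⟨h1, h2, h3, -⟩ := h1
    rcases h5 with ⟨rfl, rfl⟩ | ⟨rfl, rfl⟩
    · exact h3.symm
    · exact h2.symm

lemma forces_adj {p q : V × V} (hp : G.Adj p.1 p.2) (h : Forces G lam p q) : G.Adj q.1 q.2 := by
  induction h with
  | refl => exact hp
  | tail _ h2 _ => exact augArc_adj h2

/-- Orientation closed under single arcs of `Aug(G)`. -/
def Closed1 (G : SimpleGraph V) (lam : V → V → ℕ) (O : V → V → Prop) : Prop :=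
  IsOrientation G O ∧ ∀ p q, AugArc G lam p q → O p.1 p.2 → O q.1 q.2

lemma isATTO_iff : IsATTO G lam O ↔ Closed1 G lam O := by
  constructor
  · exact fun h => ⟨h.1, fun p q hpq hp => h.2 p q hp (Relation.ReflTransGen.single hpq)⟩
  · refine fun h => ⟨h.1, fun p q hp hpq => ?_⟩
    induction hpq with
    | refl => exact hp
    | tail _ h2 ih => exact h.2 _ _ h2 ih

lemma or_asymm (h : IsOrientation G O) {a b : V} (h1 : O a b) (h2 : O b a) : False :=
  ((h.2 a b (h.1 _ _ h1)).1 h1) h2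

lemma or_total (h : IsOrientation G O) {a b : V} (h1 : G.Adj a b) : O a b ∨ O b a := by
  by_cases h2 : O b a
  · exact Or.inr h2
  · exact Or.inl ((h.2 a b h1).2 h2)

lemma imp1 (h : Closed1 G lam O) {a b c : V} (hab : O a b) (hbc : G.Adj b c)
    (hl : lam a b ≤ lam b c) (hac : G.Adj a c → lam a c < lam b c) : O c b :=
  h.2 (a, b) (c, b) (Or.inl ⟨a, b, c, h.1.1 _ _ hab, hbc, hl, by tauto, by simp⟩) hab

lemma imp2 (h : Closed1 G lam O) {a b c : V} (hbc : O b c) (hab : G.Adj a b)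
    (hl : lam a b ≤ lam b c) (hac : G.Adj a c → lam a c < lam b c) : O b a :=
  h.2 (b, c) (b, a) (Or.inl ⟨a, b, c, hab, h.1.1 _ _ hbc, hl, by tauto, by simp⟩) hbc

lemma cor1 (h : Closed1 G lam O) {a b c d : V} {t : ℕ} (hc : CorrTri G lam a b c d t)
    (hbc : O b c) : O a c :=
  h.2 (b, c) (a, c) (Or.inr ⟨a, b, c, d, t, hc, by simp⟩) hbc

lemma cor2 (h : Closed1 G lam O) {a b c d : V} {t : ℕ} (hc : CorrTri G lam a b c d t)
    (hca : O c a) : O c b :=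
  h.2 (c, a) (c, b) (Or.inr ⟨a, b, c, d, t, hc, by simp⟩) hca

lemma two_path (hsym : ∀ a b, lam a b = lam b a) (h : Closed1 G lam O) {a b c : V}
    (hab : O a b) (hbc : O b c) (hl : lam a b ≤ lam b c) :
    G.Adj a c ∧ lam b c ≤ lam a c ∧ (O a c ∨ (lam a b = lam b c ∧ lam a c = lam b c)) := by
  have hA : G.Adj a c ∧ lam b c ≤ lam a c := by
    by_contra hcon
    refine or_asymm h.1 hbc (imp1 h hab (h.1.1 _ _ hbc) hl ?_)
    intro hac
    by_contra h2
    exact hcon ⟨hac, by omega⟩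
  refine ⟨hA.1, hA.2, ?_⟩
  rcases or_total h.1 hA.1 with hac | hca
  · exact Or.inl hac
  · right
    by_contra hcon
    have e1 := hsym a b
    have e2 := hsym a c
    exact or_asymm h.1 hca (imp1 h hbc hA.1.symm (by omega) (fun _ => by omega))

/-- Cyclic monolabel triangle. -/
def Cyc_s14 (lam : V → V → ℕ) (O : V → V → Prop) (a b c : V) : Prop :=
  O a b ∧ O b c ∧ O c a ∧ lam a b = lam b c ∧ lam b c = lam c a

lemma Cyc_s14.rot {a b c : V} (h : Cyc_s14 lam O a b c) : Cyc_s14 lam O b c a := by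
  obtain ⟨h1, h2, h3, h4, h5⟩ := h
  exact ⟨h2, h3, h1, h5, by omega⟩

/-- Backward triangle lemma. -/
lemma back (hsym : ∀ a b, lam a b = lam b a) (h : Closed1 G lam O) {a b c : V}
    (hc : Cyc_s14 lam O a b c) {r : V × V} (hr : AugArc G lam r (b, c)) (hO : O r.1 r.2) :
    Cyc_s14 lam O a r.1 r.2 := by
  obtain ⟨hab, hbc, hca, l1, l2⟩ := hc
  have Aab := h.1.1 _ _ hab
  have Abc := h.1.1 _ _ hbc
  have Aca := h.1.1 _ _ hca
  have sab := hsym a b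
  have sbc := hsym b c
  have sca := hsym c a
  rcases hr with ⟨x, y, z, h1, h2, h3, h4, h5⟩ | ⟨x, y, z, d, t, h1, h5⟩
  · rcases h5 with ⟨rfl, e⟩ | ⟨rfl, e⟩
    · obtain ⟨rfl, rfl⟩ := Prod.mk.inj e
      -- r = (x, c), c = y, b = z
      simp only at hO ⊢
      have sxa := hsym x a
      have sxb := hsym x b
      have sxc := hsym x c
      have hlt : G.Adj x b → lam x b < lam c b := by tauto
      obtain ⟨Axa, lxa, oxa⟩ := two_path hsym h hO hca (by omega)
      by_cases hgt : lam c a < lam x a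
      · exfalso
        refine or_asymm h.1 hab (cor1 h (a := b) (b := c) (c := a) (d := x) (t := lam c a)
          ⟨Abc, Aca, Aab, by omega, rfl, by omega, h1.symm, by omega, Axa.symm, by omega, ?_⟩ hca)
        intro hbx
        have := hlt hbx.symm
        omega
      · have oax : O a x := imp2 h hab Axa (by omega) (fun hxb => by have := hlt hxb; omega)
        rcases oxa with oxa | ⟨e1, e2⟩
        · exact (or_asymm h.1 oax oxa).elim
        · exact ⟨oax, hO, hca, by omega, by omega⟩
    · obtain ⟨rfl, rfl⟩ := Prod.mk.inj e
      -- b = y, c = x, r = (b, z)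
      simp only at hO ⊢
      have hlt : G.Adj c z → lam c z < lam b z := by tauto
      have saz := hsym a z
      have sbz := hsym b z
      have scz := hsym c z
      obtain ⟨Aaz, laz, oaz⟩ := two_path hsym h hab hO (by omega)
      rcases oaz with oaz | ⟨e1, e2⟩
      · obtain ⟨Acz, lcz, -⟩ := two_path hsym h hca oaz (by omega)
        have := hlt Acz
        omega
      · have oza : O z a := imp1 h hca Aaz (by omega) (fun hxb => by have := hlt hxb; omega)
        exact ⟨hab, hO, oza, by omega, by omega⟩
  · obtain ⟨Axy, Ayz, Azx, m1, m2, m3, Ayd, lyd, Azd, lzd, hxd⟩ := h1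
    rcases h5 with ⟨rfl, e⟩ | ⟨rfl, e⟩
    · obtain ⟨rfl, rfl⟩ := Prod.mk.inj e
      -- x = b, z = c, r = (y, c)
      simp only at hO ⊢
      have syc := hsym y c
      have syd := hsym y d
      have scd := hsym c d
      have sbd := hsym b d
      have sby := hsym b y
      have sad := hsym a d
      have say := hsym a y
      have odc : O d c := by
        rcases or_total h.1 Azd with o | o
        · obtain ⟨-, l, -⟩ := two_path hsym h hO o (by omega)
          omega
        · exact o
      have ody : O d y := by
        rcases or_total h.1 Ayd with o | o
        · obtain ⟨-, l, -⟩ := two_path hsym h o odc (by omega)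
          omega
        · exact o
      have oby : O b y := imp1 h ody Axy.symm (by omega)
        (fun hh => by have := hxd hh.symm; omega)
      obtain ⟨Aay, lay, oay⟩ := two_path hsym h hab oby (by omega)
      have eay : lam a y = t := by
        by_contra hne
        rcases oay with oay | ⟨e1, e2⟩
        · obtain ⟨-, l, -⟩ := two_path hsym h hca oay (by omega)
          omega
        · omega
      have Aad : G.Adj a d ∧ t ≤ lam a d := by
        by_contra hcon
        refine or_asymm h.1 hca (cor1 h (a := a) (b := y) (c := c) (d := d) (t := t)
          ⟨Aay, Ayz, Aca, by omega, by omega, by omega, Ayd, lyd, Azd, lzd, ?_⟩ hO)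
        intro hh
        by_contra h2
        exact hcon ⟨hh, by omega⟩
      obtain ⟨Aad, lad⟩ := Aad
      have lad2 : t < lam a d := by
        by_contra hcon
        have oad : O a d := imp2 h hab Aad.symm (by omega)
          (fun hh => by have := hxd hh.symm; have := hsym d b; omega)
        obtain ⟨-, l, -⟩ := two_path hsym h oad odc (by omega)
        omega
      have oay : O a y := cor2 h (a := b) (b := y) (c := a) (d := d) (t := t)
        ⟨Axy, Aay.symm, Aab, by omega, by omega, by omega, Ayd, lyd, Aad, lad2, hxd⟩ hab
      exact ⟨oay, hO, hca, by omega, by omega⟩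
    · obtain ⟨rfl, rfl⟩ := Prod.mk.inj e
      -- z = b, y = c, r = (b, x)
      simp only at hO ⊢
      have sxc := hsym x c
      have sxd := hsym x d
      have scd := hsym c d
      have sbd := hsym b d
      have sbx := hsym b x
      have sad := hsym a d
      have sax := hsym a x
      have odb : O d b := by
        rcases or_total h.1 Azd with o | o
        · obtain ⟨-, l, oad⟩ := two_path hsym h hab o (by omega)
          rcases oad with oad | ⟨e1, e2⟩
          · obtain ⟨-, l, -⟩ := two_path hsym h hca oad (by omega)
            omega
          · omega
        · exact o
      have odc : O d c := by
        rcases or_total h.1 Ayd with o | o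
        · obtain ⟨-, l, -⟩ := two_path hsym h o odb (by omega)
          omega
        · exact o
      obtain ⟨Aax, lax, oax⟩ := two_path hsym h hab hO (by omega)
      have eax : lam a x = t := by
        by_contra hne
        rcases oax with oax | ⟨e1, e2⟩
        · obtain ⟨-, l, -⟩ := two_path hsym h hca oax (by omega)
          omega
        · omega
      obtain ⟨Ada, lda, oda⟩ := two_path hsym h odc hca (by omega)
      have oxa : O x a := by
        by_cases hgt : t < lam d a
        · exact cor1 h (a := x) (b := c) (c := a) (d := d) (t := t)
            ⟨Axy, Aca, Aax, by omega, by omega, by omega, Ayd, lyd, Ada.symm, by omega, hxd⟩ hca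
        · have oda : O d a := by
            rcases or_total h.1 Ada with o | o
            · exact o
            · obtain ⟨-, l, -⟩ := two_path hsym h o odb (by omega)
              omega
          exact imp1 h oda Aax (by omega) (fun hh => by have := hxd hh.symm; omega)
      exact ⟨hab, hO, oxa, by omega, by omega⟩

/-- Flip the arcs opposite to `a` in all cyclic triangles at `a`. -/
def flipAt (lam : V → V → ℕ) (O : V → V → Prop) (a x y : V) : Prop :=
  (O x y ∧ ¬ Cyc_s14 lam O a x y) ∨ Cyc_s14 lam O a y x

lemma flip_closed (hsym : ∀ a b, lam a b = lam b a) (h : Closed1 G lam O) (a : V) :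
    Closed1 G lam (flipAt lam O a) := by
  have has := fun {x y : V} => or_asymm h.1 (a := x) (b := y)
  refine ⟨⟨?_, ?_⟩, ?_⟩
  · rintro x y (⟨h1, -⟩ | h1)
    · exact h.1.1 _ _ h1
    · exact (h.1.1 _ _ h1.2.1).symm
  · intro x y hxy
    unfold flipAt
    have n1 : Cyc_s14 lam O a x y → O x y := fun h => h.2.1
    have n2 : Cyc_s14 lam O a y x → O y x := fun h => h.2.1
    have := @has x y
    have := or_total h.1 hxy
    tauto
  · rintro ⟨x, y⟩ ⟨z, w⟩ hpq hp
    have hzw : G.Adj z w := augArc_adj hpq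
    simp only at hp ⊢
    rcases hp with ⟨h1, h2⟩ | h1
    · have h3 : O z w := h.2 _ _ hpq h1
      exact Or.inl ⟨h3, fun h4 => h2 (back hsym h h4 hpq h1)⟩
    · -- (y,x) in F
      have hsw := augArc_swap hpq
      simp only [Prod.swap_prod_mk] at hsw
      rcases or_total h.1 hzw with h2 | h2
      · refine Or.inl ⟨h2, fun h3 => ?_⟩
        have key : x = z ∨ y = w := by
          rcases hpq with ⟨_, _, _, _, _, _, _, h5⟩ | ⟨_, _, _, _, _, _, h5⟩
          · rcases h5 with ⟨e, e'⟩ | ⟨e, e'⟩ <;> simp_all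
          · rcases h5 with ⟨e, e'⟩ | ⟨e, e'⟩ <;> simp_all
        rcases key with rfl | rfl
        · exact has h1.2.2.1 h3.1
        · exact has h1.1 h3.2.2.1
      · exact Or.inr (back hsym h h1 hsw h2)

lemma flip_good (h : Closed1 G lam O) (a : V) :
    ∀ b c, ¬ Cyc_s14 lam (flipAt lam O a) a b c := by
  have has := fun {x y : V} => or_asymm h.1 (a := x) (b := y)
  have hirr : ∀ x, ¬ O x x := fun x hx => has hx hx
  rintro b c ⟨h1, h2, h3, l1, l2⟩
  have h1' : O a b := by
    rcases h1 with h1 | h1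
    · exact h1.1
    · exact (hirr _ h1.2.2.1).elim
  have h3' : O c a := by
    rcases h3 with h3 | h3
    · exact h3.1
    · exact (hirr _ h3.1).elim
  rcases h2 with ⟨h2, hn⟩ | h2
  · exact hn ⟨h1', h2, h3', l1, l2⟩
  · exact has h1' h2.2.2.1

lemma flip_keep (hsym : ∀ a b, lam a b = lam b a) (h : Closed1 G lam O) (a w : V)
    (hw : ∀ b c, ¬ Cyc_s14 lam O w b c) : ∀ b c, ¬ Cyc_s14 lam (flipAt lam O a) w b c := by
  have has := fun {x y : V} => or_asymm h.1 (a := x) (b := y)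
  rintro y x ⟨h1, h2, h3, l1, l2⟩
  have h1' : O w y := by
    rcases h1 with h1 | h1
    · exact h1.1
    · exact (hw _ _ h1.rot.rot).elim
  have h3' : O x w := by
    rcases h3 with h3 | h3
    · exact h3.1
    · exact (hw _ _ h3.rot).elim
  rcases h2 with ⟨h2, hn⟩ | h2
  · exact hw _ _ ⟨h1', h2, h3', l1, l2⟩
  · obtain ⟨oax, oxy, oya, m1, m2⟩ := h2
    have s1 := hsym x y
    have s2 := hsym x w
    have s3 := hsym y w
    have s4 := hsym a w
    obtain ⟨Aaw, law, oaw⟩ := two_path hsym h oax h3' (by omega)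
    obtain ⟨Awa, lwa, owa⟩ := two_path hsym h h1' oya (by omega)
    have e : lam a w = lam a x := by
      by_contra hne
      rcases oaw with oaw | oaw
      · rcases owa with owa | owa
        · exact has oaw owa
        · omega
      · omega
    rcases or_total h.1 Aaw with o | o
    · exact hw _ _ (Cyc_s14.rot ⟨o, h1', oya, by omega, by omega⟩)
    · exact hw _ _ (Cyc_s14.rot (Cyc_s14.rot ⟨oax, h3', o, by omega, by omega⟩))

lemma exists_noCyc (hsym : ∀ a b, lam a b = lam b a) (h : Closed1 G lam O) (S : Finset V) :
    ∃ O', Closed1 G lam O' ∧ ∀ a ∈ S, ∀ b c, ¬ Cyc_s14 lam O' a b c := by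
  classical
  induction S using Finset.induction_on with
  | empty => exact ⟨O, h, by simp⟩
  | insert a S _ ih =>
    obtain ⟨O', h1, h2⟩ := ih
    refine ⟨flipAt lam O' a, flip_closed hsym h1 a, ?_⟩
    intro w hw
    rcases Finset.mem_insert.1 hw with rfl | hw
    · exact flip_good h1 w
    · exact flip_keep hsym h1 a w (h2 w hw)

lemma tto_of_atto [Fintype V] (hsym : ∀ a b, lam a b = lam b a) (h : Closed1 G lam O) :
    ∃ O', IsTTO G lam O' := by
  obtain ⟨O', h1, h2⟩ := exists_noCyc hsym h Finset.univ
  refine ⟨O', h1.1, fun a b c hab hbc hl => ?_⟩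
  obtain ⟨A, l, o⟩ := two_path hsym h1 hab hbc hl
  refine ⟨?_, l⟩
  rcases o with o | ⟨e1, e2⟩
  · exact o
  · rcases or_total h1.1 A with o | o
    · exact o
    · exact (h2 a (Finset.mem_univ _) b c ⟨hab, hbc, o, e1, by rw [hsym c a]; exact e2.symm⟩).elim

lemma closed_of_tto (hsym : ∀ a b, lam a b = lam b a) (h : IsTTO G lam O) : Closed1 G lam O := by
  have has := fun {x y : V} => or_asymm h.1 (a := x) (b := y)
  have hadj := h.1.1
  have base : ∀ a b c, G.Adj a b → G.Adj b c → lam a b ≤ lam b c →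
      (¬ G.Adj a c ∨ lam a c < lam b c) → ¬ (O a b ∧ O b c) := by
    rintro a b c - - h3 h4 ⟨h5, h6⟩
    obtain ⟨h7, h8⟩ := h.2 a b c h5 h6 h3
    have := hadj _ _ h7
    rcases h4 with h4 | h4
    · exact h4 this
    · omega
  have corr : ∀ a b c d t, CorrTri G lam a b c d t → ¬ (O b c ∧ O c a) := by
    rintro a b c d t ⟨Aab, Abc, Aca, m1, m2, m3, Abd, lbd, Acd, lcd, had⟩ ⟨obc, oca⟩
    have oba := (h.2 b c a obc oca (by omega)).1
    have := hsym c d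
    have := hsym b d
    have := hsym a d
    have := hsym a b
    have odc : O d c := by
      rcases or_total h.1 Acd with o | o
      · have := h.2 b c d obc o (by omega)
        omega
      · exact o
    have odb : O d b := by
      rcases or_total h.1 Abd with o | o
      · have := h.2 b d c o odc (by omega)
        omega
      · exact o
    obtain ⟨oda, l⟩ := h.2 d b a odb oba (by omega)
    have := had (hadj _ _ oda).symm
    omega
  refine ⟨h.1, ?_⟩
  rintro p q (⟨a, b, c, h1, h2, h3, h4, h5⟩ | ⟨a, b, c, d, t, h1, h5⟩) hp
  · have hb := base a b c h1 h2 h3 h4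
    have t1 := or_total h.1 h1
    have t2 := or_total h.1 h2
    rcases h5 with ⟨rfl, rfl⟩ | ⟨rfl, rfl⟩ <;> simp only at hp ⊢ <;> tauto
  · have hb := corr a b c d t h1
    have t1 := or_total h.1 h1.2.1
    have t2 := or_total h.1 h1.2.2.1
    rcases h5 with ⟨rfl, rfl⟩ | ⟨rfl, rfl⟩ <;> simp only at hp ⊢ <;> tauto

/-- Walks from `v` with decreasing labels, all below `L`. -/
inductive DecW (lam : V → V → ℕ) (O : V → V → Prop) (L : ℕ) (v : V) : V → ℕ → Prop
  | base : DecW lam O L v v L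
  | snoc (b c : V) (l : ℕ) : DecW lam O L v b l → O b c → lam b c < l →
      DecW lam O L v c (lam b c)

lemma DecW.le {L l : ℕ} {v b : V} (h : DecW lam O L v b l) : l ≤ L := by
  induction h with
  | base => exact le_rfl
  | snoc b c l _ _ h ih => omega

lemma DecW.no_close (h : IsTTO G lam O) {L l : ℕ} {v b : V} (hw : DecW lam O L v b l) :
    O b v → L ≤ lam b v → False := by
  induction hw with
  | base => exact fun o _ => or_asymm h.1 o o
  | snoc b c l hw o hl ih =>
    intro ocv hL
    have := hw.le
    obtain ⟨h1, h2⟩ := h.2 b c v o ocv (by omega)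
    exact ih h1 (by omega)

lemma DecW.extend (h : IsTTO G lam O) {L l : ℕ} {a v b : V} (hw : DecW lam O L v b l)
    (hav : O a v) (hL : lam a v = L) : ∀ c, O b c →
    ∃ v' l', O a v' ∧ DecW lam O (lam a v') v' c l' := by
  induction hw with
  | base =>
    intro c o
    by_cases hl : lam v c < L
    · subst hL
      exact ⟨v, _, hav, DecW.snoc _ _ _ DecW.base o hl⟩
    · exact ⟨c, _, (h.2 a v c hav o (by omega)).1, DecW.base⟩
  | snoc b d l hw o hl ih =>
    intro c o'
    by_cases hl' : lam d c < lam b d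
    · subst hL
      exact ⟨v, _, hav, DecW.snoc _ _ _ (DecW.snoc _ _ _ hw o hl) o' hl'⟩
    · exact ih c (h.2 b d c o o' (by omega)).1

lemma tto_acyclic (h : IsTTO G lam O) (a : V) : ¬ Relation.TransGen O a a := by
  intro hc
  have key : ∀ c, Relation.TransGen O a c → ∃ v l, O a v ∧ DecW lam O (lam a v) v c l := by
    intro c hc
    induction hc with
    | single o => exact ⟨_, _, o, DecW.base⟩
    | tail _ o ih =>
      obtain ⟨v, l, h1, h2⟩ := ih
      exact h2.extend h h1 rfl _ o
  obtain ⟨v, l, h1, h2⟩ := key a hc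
  cases h2 with
  | base => exact or_asymm h.1 h1 h1
  | snoc b _ l hw o hl =>
    have := hw.le
    obtain ⟨h3, h4⟩ := h.2 b a v o h1 (by omega)
    exact hw.no_close h h3 h4

lemma nessAcyclic_of_tto (hsym : ∀ a b, lam a b = lam b a) (h : IsTTO G lam O) :
    NessAcyclic G lam := by
  have hat := isATTO_iff.2 (closed_of_tto hsym h)
  have hsub : ∀ p ∈ Ness G lam, O p.1 p.2 := by
    rintro ⟨x, y⟩ ⟨h1, h2⟩
    rcases or_total h.1 h1 with o | o
    · exact o
    · exact hat.2 _ _ o h2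
  rintro ⟨k, hk, v, -, hv⟩
  have hw : ∀ n : ℕ, Relation.TransGen O (v 0) (v ((n + 1 : ℕ) : ZMod k)) := by
    intro n
    induction n with
    | zero => exact Relation.TransGen.single (by simpa using hsub _ (hv 0))
    | succ n ih =>
      refine ih.tail ?_
      have := hsub _ (hv ((n + 1 : ℕ) : ZMod k))
      simpa using this
  have := hw (k - 1)
  rw [show k - 1 + 1 = k by omega, ZMod.natCast_self] at this
  exact tto_acyclic h _ this

lemma closed_of_ness [Fintype V] (h : NessAcyclic G lam) : ∃ O, IsATTO G lam O := by
  have h2 : ∀ p : V × V, G.Adj p.1 p.2 → Forces G lam p p.swap → Forces G lam p.swap p →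
      False := by
    rintro ⟨x, y⟩ hadj f1 f2
    have hadj : G.Adj x y := hadj
    refine h ⟨2, le_rfl, fun i => if i = 0 then x else y, ?_, ?_⟩
    · intro i j
      have := hadj.ne
      fin_cases i <;> fin_cases j
      · exact fun _ => rfl
      · exact fun e => (this e).elim
      · exact fun e => (this e.symm).elim
      · exact fun _ => rfl
    · intro i
      fin_cases i
      · exact ⟨hadj, f2⟩
      · exact ⟨hadj.symm, f1⟩
  -- a maximal consistent closed set of arcs
  let P : Set (V × V) → Prop := fun S => (∀ p ∈ S, G.Adj p.1 p.2) ∧ (∀ p ∈ S, p.swap ∉ S) ∧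
    ∀ p ∈ S, ∀ q, Forces G lam p q → q ∈ S
  obtain ⟨S, hS⟩ := (Set.toFinite {S | P S}).exists_maximal ⟨∅, by simp [P]⟩
  obtain ⟨hadj, hcons, hcl⟩ : P S := hS.1
  have ext : ∀ p : V × V, G.Adj p.1 p.2 → p.swap ∉ S → ¬ Forces G lam p p.swap → p ∈ S := by
    intro p hp hps hf
    have hP : P (S ∪ {q | Forces G lam p q}) := by
      refine ⟨?_, ?_, ?_⟩
      · rintro q (hq | hq)
        · exact hadj q hq
        · exact forces_adj hp hq
      · rintro q (hq | hq) (hq' | hq')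
        · exact hcons q hq hq'
        · have := forces_swap (show Forces G lam p q.swap from hq')
          rw [Prod.swap_swap] at this
          exact hps (hcl q hq _ this)
        · exact hps (hcl _ hq' _ (forces_swap (show Forces G lam p q from hq)))
        · have := forces_swap (show Forces G lam p q.swap from hq')
          rw [Prod.swap_swap] at this
          exact hf (Relation.ReflTransGen.trans hq this)
      · rintro q (hq | hq) r hr
        · exact Or.inl (hcl q hq r hr)
        · exact Or.inr (Relation.ReflTransGen.trans hq hr)
    exact hS.2 hP Set.subset_union_left (Or.inr Relation.ReflTransGen.refl)
  refine ⟨fun a b => (a, b) ∈ S, ⟨fun a b hab => hadj _ hab, fun a b hab => ⟨fun h3 => hcons _ h3,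
    fun h3 => ?_⟩⟩, fun p q hp hpq => hcl p hp q hpq⟩
  by_contra h4
  have f1 : Forces G lam (a, b) (b, a) := by
    by_contra hf
    exact h4 (ext (a, b) hab h3 hf)
  have f2 : Forces G lam (b, a) (a, b) := by
    by_contra hf
    exact h3 (ext (b, a) hab.symm h4 hf)
  exact h2 (a, b) hab f1 f2

end Helpers

theorem stmt14 {V : Type*} [Fintype V] (G : SimpleGraph V) (lam : V → V → ℕ)
    (hsym : ∀ a b, lam a b = lam b a) :
    ((∃ O : V → V → Prop, IsTTO G lam O) ↔ (∃ O : V → V → Prop, IsATTO G lam O)) ∧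
      ((∃ O : V → V → Prop, IsATTO G lam O) ↔ NessAcyclic G lam) := by
  have h12 : (∃ O : V → V → Prop, IsATTO G lam O) → ∃ O : V → V → Prop, IsTTO G lam O := by
    rintro ⟨O, h⟩
    exact tto_of_atto hsym (isATTO_iff.1 h)
  refine ⟨⟨?_, h12⟩, ?_, closed_of_ness⟩
  · rintro ⟨O, h⟩
    exact ⟨O, isATTO_iff.2 (closed_of_tto hsym h)⟩
  · intro h
    obtain ⟨O, h⟩ := h12 h
    exact nessAcyclic_of_tto hsym h
end
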